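/- arXiv:1606.09052 — 2 statements merged into one kernel-verified Lean document; each statement's English description precedes it below -/
import Mathlib

section
/- Conservation of the Miura operator: under these hypotheses, C_{m,n} = C_{m,n-1} for all 0 ≤ m ≤ r+1 and all n ∈ ℤ; equivalently, the Miura operator μ_n = (D − x_{r+1,n})(D − x_{r,n})⋯(D − x_{1,n}) is independent of n. -/
def actT {R : Type*} [Ring R] (a : ℤ → R) (F : ℕ → ℤ → R) : ℕ → ℤ → R
  | 0, n => F 0 (n + 1)
  | m + 1, n => F (m + 1) (n + 1) + a n * F m n

def shF {R : Type*} (F : ℕ → ℤ → R) : ℕ → ℤ → R := fun m n => F m (n - 1)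

def prodP {R : Type*} [Ring R] (x : ℕ → ℤ → R) : ℕ → ℕ → ℤ → R
  | 0 => fun m _ => if m = 0 then 1 else 0
  | k + 1 => actT (x (k + 1)) (prodP x k)

theorem actT_exchange {R : Type*} [Ring R] (a b a' b' : ℤ → R) (F : ℕ → ℤ → R)
    (h1 : ∀ n, a n * b n = a' n * b' n) (h2 : ∀ n, a n + b (n + 1) = a' n + b' (n + 1)) :
    actT a (actT b F) = actT a' (actT b' F) := by
  funext m n
  rcases m with _ | _ | m
  · simp [actT]
  · simp only [actT]
    have : ∀ (P F u v : R), P + v * F + u * F = P + (u + v) * F := by intros; noncomm_ring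
    rw [this, this, h2]
  · simp only [actT]
    rw [mul_add, mul_add, ← mul_assoc, ← mul_assoc, h1]
    have : ∀ P Q : R, P + b (n + 1) * F (m + 1) (n + 1) + (a n * F (m + 1) (n + 1) + Q)
        = P + (a n + b (n + 1)) * F (m + 1) (n + 1) + Q := by intros; noncomm_ring
    rw [this, h2]
    noncomm_ring

theorem shF_actT {R : Type*} [Ring R] (a : ℤ → R) (F : ℕ → ℤ → R) :
    shF (actT a F) = actT (fun n => a (n - 1)) (shF F) := by
  funext m n
  rcases m with _ | m
  · simp [actT, shF]
  · simp [actT, shF]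

theorem prodP_shift {R : Type*} [Ring R] (x y : ℕ → ℤ → R) (r : ℕ)
    (hy1 : x 1 = y 1)
    (h1 : ∀ k n, k + 1 ≤ r → x (k + 2) n * y (k + 1) n = y (k + 2) n * x (k + 1) (n - 1))
    (h2 : ∀ k n, k + 1 ≤ r → x (k + 2) n + y (k + 1) (n + 1) = y (k + 2) n + x (k + 1) n)
    (hyr : ∀ n, y (r + 1) n = x (r + 1) (n - 1)) :
    prodP x (r + 1) = shF (prodP x (r + 1)) := by
  have key : ∀ k, k ≤ r → prodP x (k + 1) = actT (y (k + 1)) (shF (prodP x k)) := by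
    intro k
    induction k with
    | zero => intro _; simp only [prodP, hy1, zero_add]; rfl
    | succ k ih =>
      intro hk
      have e : prodP x (k + 1 + 1) = actT (x (k + 1 + 1)) (prodP x (k + 1)) := rfl
      have e' : prodP x (k + 1) = actT (x (k + 1)) (prodP x k) := rfl
      rw [e]
      nth_rewrite 1 [ih (by omega)]
      rw [e', shF_actT]
      apply actT_exchange
      · intro n; exact h1 k n hk
      · intro n
        have := h2 k n hk
        simpa using this
  rw [key r le_rfl]
  have e' : prodP x (r + 1) = actT (x (r + 1)) (prodP x r) := rfl
  rw [← key r le_rfl, e', shF_actT, ← e', key r le_rfl]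
  congr 1
  funext n; exact hyr n

def genC {R : Type*} [Ring R] (x : ℕ → ℤ → R) (k m : ℕ) (n : ℤ) : R :=
  ∑ S ∈ Finset.powersetCard m (Finset.Icc 1 k),
    (((S.sort (· ≤ ·)).reverse.zipIdx.map Prod.swap).map
      (fun ji => x ji.2 (n + ((k : ℤ) - (ji.2 : ℤ)) - (ji.1 : ℤ)))).prod

theorem sort_insert_max (S : Finset ℕ) (a : ℕ) (h : ∀ b ∈ S, b < a) :
    ((insert a S).sort (· ≤ ·)).reverse = a :: (S.sort (· ≤ ·)).reverse := by
  have ha : a ∉ S := fun hh => lt_irrefl _ (h a hh)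
  have : (insert a S).sort (· ≤ ·) = S.sort (· ≤ ·) ++ [a] := by
    apply List.Perm.eq_of_pairwise' (r := (· ≤ ·))
    · exact Finset.pairwise_sort _ _
    · rw [List.pairwise_append]
      refine ⟨Finset.pairwise_sort _ _, by simp, ?_⟩
      intro b hb c hc
      simp at hb hc
      subst hc
      exact (h b hb).le
    · rw [List.perm_ext_iff_of_nodup (Finset.sort_nodup _ _)]
      · intro b; simp [or_comm]
      · rw [List.nodup_append]
        refine ⟨Finset.sort_nodup _ _, by simp, ?_⟩
        intro b hb c hc
        simp at hb hc
        subst hc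
        exact (h b hb).ne
  rw [this]; simp

theorem genC_eq {R : Type*} [Ring R] (x : ℕ → ℤ → R) (k : ℕ) : genC x k = prodP x k := by
  induction k with
  | zero =>
    funext m n
    rcases m with _ | m
    · simp [genC, prodP]
    · have : Finset.powersetCard (m + 1) (Finset.Icc 1 0) = ∅ :=
        Finset.powersetCard_eq_empty.2 (by simp)
      simp only [genC, prodP, this]
      simp
  | succ k ih =>
    have e' : prodP x (k + 1) = actT (x (k + 1)) (prodP x k) := rfl
    rw [e', ← ih]
    funext m n
    rcases m with _ | m
    · simp [genC, actT]
    · simp only [genC, actT]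
      have hI : Finset.Icc 1 (k + 1) = insert (k + 1) (Finset.Icc 1 k) := by
        ext b; simp; omega
      rw [hI, Finset.powersetCard_succ_insert (by simp), Finset.sum_union]
      · congr 1
        · apply Finset.sum_congr rfl
          intro S _
          congr 2
          funext ji
          congr 1
          push_cast; ring
        · rw [Finset.sum_image, Finset.mul_sum]
          · apply Finset.sum_congr rfl
            intro S hS
            have hlt : ∀ b ∈ S, b < k + 1 := by
              intro b hb
              have := (Finset.mem_powersetCard.1 hS).1 hb
              simp at this; omega
            rw [sort_insert_max S (k + 1) hlt, List.zipIdx_cons, zero_add, List.zipIdx_succ]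
            simp only [List.map_cons, List.prod_cons, List.map_map]
            congr 1
            · congr 1; simp
            · congr 2
              funext ji
              simp only [Function.comp, Prod.swap]
              congr 1
              push_cast; ring
          · intro S hS T hT hST
            have h1 : k + 1 ∉ S := fun hb => by
              have := (Finset.mem_powersetCard.1 hS).1 hb
              simp at this
            have h2 : k + 1 ∉ T := fun hb => by
              have := (Finset.mem_powersetCard.1 hT).1 hb
              simp at this
            have := congrArg (fun U => Finset.erase U (k + 1)) hST
            simpa [Finset.erase_insert h1, Finset.erase_insert h2] using this
      · rw [Finset.disjoint_left]
        intro S hS hS'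
        obtain ⟨T, hT, rfl⟩ := Finset.mem_image.1 hS'
        have := (Finset.mem_powersetCard.1 hS).1 (Finset.mem_insert_self _ _)
        simp at this

theorem key_units {R : Type*} [Ring R] (Q Q' a b u w t : Rˣ) (p c v : R)
    (hQ : ∀ x : R, (Q : R) * x = x * Q) (hQ' : ∀ x : R, (Q' : R) * x = x * Q')
    (H1 : (Q : R) * b * p = (a : R) ^ 2 - u * w)
    (H2 : (Q : R) * c * a = (b : R) ^ 2 - v * t)
    (hab : (a : R) * b = Q * b * a) (hub : (u : R) * b = Q * b * u)
    (hwt : (w : R) * t = Q' * t * w) (hat : (a : R) * t = Q' * t * a)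
    (htb : (t : R) * b = b * t) (haw : (a : R) * w = w * a) :
    v * (↑u⁻¹ : R) * (a * (↑b⁻¹ : R) - p * (↑a⁻¹ : R))
      = (b * (↑a⁻¹ : R) - c * (↑b⁻¹ : R)) * (w * (↑t⁻¹ : R)) := by
  have L1 : (a * (↑b⁻¹ : R) - p * (↑a⁻¹ : R)) = ((Q * b)⁻¹ * u * w * a⁻¹ : Rˣ) := by
    apply (Q * b).isUnit.mul_left_cancel
    apply a.isUnit.mul_right_cancel
    push_cast
    have : (Q : R) * b * (a * (↑b⁻¹ : R) - p * (↑a⁻¹ : R)) * a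
      = (Q * b * a) * (↑b⁻¹ : R) * a - Q * b * p * ((↑a⁻¹ : R) * a) := by noncomm_ring
    rw [this, ← hab, H1]
    simp [mul_assoc, pow_two]
  have L2 : (b * (↑a⁻¹ : R) - c * (↑b⁻¹ : R)) = v * (t * b⁻¹ * a⁻¹ : Rˣ) := by
    apply (a * b).isUnit.mul_right_cancel
    push_cast
    have : (b * (↑a⁻¹ : R) - c * (↑b⁻¹ : R)) * (a * b)
      = b * ((↑a⁻¹ : R) * a) * b - c * (↑b⁻¹ : R) * (a * b) := by noncomm_ring
    have e : c * (↑b⁻¹ : R) * (a * b) = Q * c * a := by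
      rw [hab, hQ c, hQ b]; simp only [mul_assoc, Units.inv_mul_cancel_left]
    have e2 : v * ((t : R) * (↑b⁻¹ : R) * (↑a⁻¹ : R)) * (a * b) = v * t := by
      simp [mul_assoc]
    rw [this, e, e2, H2]; simp [pow_two]
  rw [L1, L2]
  have hubU : u * b = Q * b * u := Units.ext (by simpa using hub)
  have hwtU : w * t = Q' * t * w := Units.ext (by simpa using hwt)
  have hatU : a * t = Q' * t * a := Units.ext (by simpa using hat)
  have htbU : t * b = b * t := Units.ext (by simpa using htb)
  have hawU : a * w = w * a := Units.ext (by simpa using haw)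
  have hQ'U : ∀ z : Rˣ, Q' * z = z * Q' := fun z => Units.ext (by simpa using hQ' z)
  have hL : u⁻¹ * ((Q * b)⁻¹ * u * w * a⁻¹) = b⁻¹ * (w * a⁻¹) := by
    have : u⁻¹ * (Q * b)⁻¹ * u = b⁻¹ := by
      rw [← mul_inv_rev, ← hubU]; group
    rw [← this]; group
  have hR : t * b⁻¹ * a⁻¹ * (w * t⁻¹) = b⁻¹ * (w * a⁻¹) := by
    have h1 : t * b⁻¹ = b⁻¹ * t := by
      rw [mul_inv_eq_iff_eq_mul, mul_assoc, htbU]; group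
    have h2 : t * (a⁻¹ * w) = (a⁻¹ * w) * t := by
      have : (a⁻¹ * w) * t = a⁻¹ * (Q' * t * w) := by rw [mul_assoc, hwtU]
      rw [this, eq_inv_mul_iff_mul_eq, ← mul_assoc, hatU]; group
    have h3 : a⁻¹ * w = w * a⁻¹ := by
      rw [inv_mul_eq_iff_eq_mul, ← mul_assoc, hawU]; group
    calc t * b⁻¹ * a⁻¹ * (w * t⁻¹) = b⁻¹ * (t * (a⁻¹ * w)) * t⁻¹ := by rw [h1]; group
      _ = b⁻¹ * (w * a⁻¹) := by rw [h2, h3]; group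
  rw [mul_assoc v, mul_assoc v, ← Units.val_mul, hL, ← Units.val_mul, ← Units.val_mul, hR]


/-- ξ_{α,n} := M_{α,n} · M_{α,n+1}⁻¹ -/
def xiv {R : Type*} [Ring R] (M Mi : ℕ → ℤ → R) (α : ℕ) (n : ℤ) : R :=
  M α n * Mi α (n + 1)

/-- ξ_{α,n}⁻¹ = M_{α,n+1} · M_{α,n}⁻¹ -/
def xivInv {R : Type*} [Ring R] (M Mi : ℕ → ℤ → R) (α : ℕ) (n : ℤ) : R :=
  M α (n + 1) * Mi α n

/-- x_{α,n} := ξ_{α,n}⁻¹ · ξ_{α-1,n} -/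
def xv {R : Type*} [Ring R] (M Mi : ℕ → ℤ → R) (α : ℕ) (n : ℤ) : R :=
  xivInv M Mi α n * xiv M Mi (α - 1) n

/-- The Miura coefficient C_{m,n} = Σ_{r+1 ≥ α₁ > ⋯ > α_m ≥ 1}
∏_{j=1}^m x_{α_j, n+(r+1-α_j)-(j-1)} (ordered product, j increasing left to right). -/
def CMiura {R : Type*} [Ring R] (M Mi : ℕ → ℤ → R) (r : ℕ) (m : ℕ) (n : ℤ) : R :=
  ∑ S ∈ Finset.powersetCard m (Finset.Icc 1 (r + 1)),
    (((S.sort (· ≤ ·)).reverse.zipIdx.map Prod.swap).map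
      (fun ji => xv M Mi ji.2 (n + ((r : ℤ) + 1 - (ji.2 : ℤ)) - (ji.1 : ℤ)))).prod

theorem quantum_Q_Miura_conservation
    {R : Type*} [Ring R] (q A Δ : Rˣ)
    (hq : ∀ x : R, (q : R) * x = x * (q : R))
    (r : ℕ) (hr : 1 ≤ r)
    (M Mi : ℕ → ℤ → R)
    (hM0 : ∀ n : ℤ, M 0 n = 1)
    (hMtop : ∀ n : ℤ, M (r + 2) n = 0)
    (hMiL : ∀ (α : ℕ) (n : ℤ), α ≤ r + 1 → M α n * Mi α n = 1)
    (hMiR : ∀ (α : ℕ) (n : ℤ), α ≤ r + 1 → Mi α n * M α n = 1)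
    (hMsys : ∀ (α : ℕ) (n : ℤ), 1 ≤ α → α ≤ r + 1 →
      (q : R) ^ α * M α (n + 1) * M α (n - 1) = M α n ^ 2 - M (α + 1) n * M (α - 1) n)
    (hcom : ∀ (α β ε : ℕ) (n : ℤ), ε ≤ 1 → α ≤ r + 1 → β ≤ r + 1 →
      M α n * M β (n + (ε : ℤ)) = (q : R) ^ (ε * min α β) * M β (n + (ε : ℤ)) * M α n)
    (hAΔ : ∀ n : ℤ, M (r + 1) n = ((A ^ n : Rˣ) : R) * (Δ : R))
    (hΔM : ∀ (α : ℕ) (n : ℤ), 1 ≤ α → α ≤ r + 1 →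
      (Δ : R) * M α n = ((q ^ ((α : ℤ) * n) : Rˣ) : R) * M α n * (Δ : R))
    (hAM : ∀ (α : ℕ) (n : ℤ), 1 ≤ α → α ≤ r + 1 →
      (A : R) * M α n = ((q ^ (-(α : ℤ)) : Rˣ) : R) * M α n * (A : R))
    (hΔA : (Δ : R) * (A : R) = (q : R) ^ (r + 1) * (A : R) * (Δ : R))
    (hext : ∀ (α β : ℕ) (n p : ℤ), α ≤ r + 1 → β ≤ r + 1 →
      |p| ≤ |(β : ℤ) - (α : ℤ)| + 1 →
      M α n * M β (n + p) = ((q ^ (p * ((min α β : ℕ) : ℤ)) : Rˣ) : R) * M β (n + p) * M α n) :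
    ∀ (m : ℕ) (n : ℤ), m ≤ r + 1 → CMiura M Mi r m n = CMiura M Mi r m (n - 1) := by
  intro m n _
  have hqp : ∀ (k : ℕ) (x : R), ((q ^ k : Rˣ) : R) * x = x * ((q ^ k : Rˣ) : R) := by
    intro k x
    have : Commute (q : R) x := hq x
    simpa using (this.pow_left k).eq
  have hC : ∀ n, CMiura M Mi r m n = prodP (xv M Mi) (r + 1) m n := by
    intro n
    rw [← genC_eq]
    simp only [CMiura, genC]
    push_cast
    rfl
  have hinv : ∀ α n, α ≤ r + 1 → xiv M Mi α n * xivInv M Mi α n = 1 := by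
    intro α n hα
    simp only [xiv, xivInv]
    rw [mul_assoc, ← mul_assoc (Mi α (n+1)), hMiR _ _ hα, one_mul, hMiL _ _ hα]
  have hMi0 : ∀ n, Mi 0 n = 1 := by
    intro n
    have := hMiL 0 n (by omega)
    rwa [hM0, one_mul] at this
  have hMiTop : ∀ n, Mi (r + 1) n = ((Δ⁻¹ * (A ^ n)⁻¹ : Rˣ) : R) := by
    intro n
    have h := hMiR (r + 1) n le_rfl
    rw [hAΔ, ← Units.val_mul] at h
    rw [← mul_inv_rev, ← Units.mul_eq_one_iff_eq_inv]; exact h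
  have hTop : ∀ n, xivInv M Mi (r + 1) n = A := by
    intro n
    simp only [xivInv]
    rw [hMiTop, hAΔ, ← Units.val_mul, ← Units.val_mul]
    congr 1
    group
  have main := prodP_shift (xv M Mi)
    (fun α n => xivInv M Mi α n * xiv M Mi (α - 1) (n - 1)) r ?_ ?_ ?_ ?_
  · rw [hC, hC]
    exact congrFun (congrFun main m) n
  · funext n
    simp [xv, xiv, hM0, hMi0]
  · intro k n hk
    simp only [xv, Nat.add_sub_cancel, show k + 2 - 1 = k + 1 from rfl]
    have e1 := hinv (k + 1) n (by omega)
    have e2 := hinv (k + 1) (n - 1) (by omega)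
    rw [mul_assoc, ← mul_assoc (xiv M Mi (k + 1) n), e1, mul_assoc,
      ← mul_assoc (xiv M Mi (k + 1) (n - 1)), e2]
  · intro k n hk
    simp only [xv, Nat.add_sub_cancel, show k + 2 - 1 = k + 1 from rfl, add_sub_cancel_right]
    let U : ∀ α : ℕ, ℤ → α ≤ r + 1 → Rˣ := fun α n h => ⟨M α n, Mi α n, hMiL α n h, hMiR α n h⟩
    have c1 : ∀ (α β : ℕ), α ≤ r + 1 → β ≤ r + 1 → ∀ n : ℤ,
        M α n * M β (n + 1) = (q : R) ^ (min α β) * M β (n + 1) * M α n := by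
      intro α β h h' n
      simpa using hcom α β 1 n le_rfl h h'
    have c0 : ∀ (α β : ℕ), α ≤ r + 1 → β ≤ r + 1 → ∀ n : ℤ,
        M α n * M β n = M β n * M α n := by
      intro α β h h' n
      simpa using hcom α β 0 n (by omega) h h'
    have K := key_units (q ^ (k + 1)) (q ^ k) (U (k + 1) n (by omega)) (U (k + 1) (n + 1) (by omega))
      (U (k + 2) n (by omega)) (U k n (by omega)) (U k (n + 1) (by omega))
      (M (k + 1) (n - 1)) (M (k + 1) (n + 2)) (M (k + 2) (n + 1)) (hqp _) (hqp _)
      (by simpa [U] using hMsys (k + 1) n (by omega) (by omega))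
      (by simpa [U, add_assoc] using hMsys (k + 1) (n + 1) (by omega) (by omega))
      (by simpa [U] using c1 (k + 1) (k + 1) (by omega) (by omega) n)
      (by simpa [U] using c1 (k + 2) (k + 1) (by omega) (by omega) n)
      (by simpa [U] using c1 k k (by omega) (by omega) n)
      (by simpa [U] using c1 (k + 1) k (by omega) (by omega) n)
      (by simpa [U] using c0 k (k + 1) (by omega) (by omega) (n + 1))
      (by simpa [U] using c0 (k + 1) k (by omega) (by omega) n)
    have K' : xivInv M Mi (k + 2) n * (xiv M Mi (k + 1) n - xiv M Mi (k + 1) (n - 1))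
        = (xivInv M Mi (k + 1) n - xivInv M Mi (k + 1) (n + 1)) * xiv M Mi k n := by
      simp only [xiv, xivInv, sub_add_cancel, add_assoc]
      exact K
    rw [mul_sub, sub_mul, sub_eq_sub_iff_add_eq_add] at K'
    rw [K', add_comm]
  · intro n
    simp only [xv, hTop]
end

section
/- Exchange relations for the opposite current (componentwise form of relation (nmcom) of the Drinfeld-type presentation): under these hypotheses, define F_n := A^{−n}·M_{r,n}·Δ^{−1} for n ∈ ℤ. Then for all a,b ∈ ℤ, [F_{a+1}, F_b]_{q^{−1}} + [F_{b+1}, F_a]_{q^{−1}} = 0, i.e. F_{a+1}·F_b − q^{−1}·F_b·F_{a+1} + F_{b+1}·F_a − q^{−1}·F_a·F_{b+1} = 0; this is the componentwise form of (z − q^{−1}w)𝔣(z)𝔣(w) + (w − q^{−1}z)𝔣(w)𝔣(z) = 0 for the current 𝔣(z) = Σ_n z^{−n}·q^{n/2}·F_n. -/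
structure HSys {R : Type*} [Ring R] (q : R) (h k : ℤ → ℤ → R) : Prop where
  qc : ∀ x, q * x = x * q
  nd : ∀ α, (∀ n, h α n = 0 ∧ k α n = 0) ∨ (∀ n, h α n * k α n = 1 ∧ k α n * h α n = 1)
  c0 : ∀ α β n, h α n * h β n = h β n * h α n
  c1 : ∀ α β n, α ≠ β → h α n * h β (n+1) = h β (n+1) * h α n
  cq : ∀ α n, h α n * h α (n+1) = q * (h α (n+1) * h α n)
  ev : ∀ α n, h α (n+1) * (k α n - k (α-1) n) = (h α n - h (α+1) n) * k α (n-1)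

namespace HSys
variable {R : Type*} [Ring R] {q : R} {h k : ℤ → ℤ → R}

theorem comm_inv {x y z : R} (hyz : y * z = 1) (hzy : z * y = 1) (hxy : x * y = y * x) :
    x * z = z * x := by
  calc x * z = z * y * x * z := by rw [hzy, one_mul]
    _ = z * (y * x) * z := by noncomm_ring
    _ = z * x * (y * z) := by rw [← hxy]; noncomm_ring
    _ = z * x := by rw [hyz, mul_one]

theorem hk0 (S : HSys q h k) (α β n) : h α n * k β n = k β n * h α n := by
  rcases S.nd β with H | H
  · simp [H]
  · exact comm_inv (H n).1 (H n).2 (S.c0 _ _ _)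

theorem hk1 (S : HSys q h k) (α β n) (hab : α ≠ β) : h α n * k β (n+1) = k β (n+1) * h α n := by
  rcases S.nd β with H | H
  · simp [H]
  · exact comm_inv (H _).1 (H _).2 (S.c1 _ _ _ hab)

theorem hk1' (S : HSys q h k) (α β n) (hab : α ≠ β) : h α (n+1) * k β n = k β n * h α (n+1) := by
  rcases S.nd β with H | H
  · simp [H]
  · exact comm_inv (H _).1 (H _).2 (S.c1 _ _ _ hab.symm).symm

theorem kk0 (S : HSys q h k) (α β n) : k α n * k β n = k β n * k α n := by
  rcases S.nd β with H | H
  · simp [H]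
  · exact comm_inv (H n).1 (H n).2 (S.hk0 _ _ _).symm

theorem kk1 (S : HSys q h k) (α β n) (hab : α ≠ β) : k α n * k β (n+1) = k β (n+1) * k α n := by
  rcases S.nd β with H | H
  · simp [H]
  · exact comm_inv (H _).1 (H _).2 (S.hk1' _ _ _ hab.symm).symm

/-- `h_{n+1} k_n = q k_n h_{n+1}` -/
theorem hkq (S : HSys q h k) (α n) : h α (n+1) * k α n = q * (k α n * h α (n+1)) := by
  rcases S.nd α with H | H
  · simp [H]
  · calc h α (n+1) * k α n = k α n * (h α n * h α (n+1)) * k α n := by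
          rw [← mul_assoc, (H n).2, one_mul]
      _ = q * (k α n * h α (n+1) * (h α n * k α n)) := by
          rw [S.cq, ← mul_assoc (k α n) q, ← S.qc]; noncomm_ring
      _ = _ := by rw [(H n).1, mul_one]

theorem kkq (S : HSys q h k) (α n) : k α n * k α (n+1) = q * (k α (n+1) * k α n) := by
  rcases S.nd α with H | H
  · simp [H]
  · calc k α n * k α (n+1) = k α (n+1) * (h α (n+1) * k α n) * k α (n+1) := by
          rw [← mul_assoc, (H (n+1)).2, one_mul]
      _ = q * (k α (n+1) * k α n * (h α (n+1) * k α (n+1))) := by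
          rw [S.hkq, ← mul_assoc (k α (n+1)) q, ← S.qc]; noncomm_ring
      _ = _ := by rw [(H (n+1)).1, mul_one]

theorem hkh (S : HSys q h k) (α n m) : h α n * (k α m * h α m) = h α n := by
  rcases S.nd α with H | H
  · simp [H]
  · rw [(H m).2, mul_one]
theorem khk (S : HSys q h k) (α n m) : k α n * h α n * k α m = k α m := by
  rcases S.nd α with H | H
  · simp [H]
  · rw [(H n).2, one_mul]

theorem dual (S : HSys q h k) : HSys q (fun α => k (-α)) (fun α => h (-α)) where
  qc := S.qc
  nd α := (S.nd (-α)).imp (fun H n => (H n).symm) (fun H n => (H n).symm)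
  c0 α β n := S.kk0 _ _ _
  c1 α β n hab := S.kk1 _ _ _ (by simpa using hab)
  cq α n := S.kkq _ _
  ev α n := by
    have e := S.ev (-α) n
    rw [show -(α-1) = -α + 1 by ring, show -(α+1) = -α - 1 by ring]
    rcases S.nd (-α) with H | H
    · simp [H]
    · calc k (-α) (n+1) * (h (-α) n - h (-α+1) n)
          = k (-α) (n+1) * ((h (-α) n - h (-α+1) n) * k (-α) (n-1)) * h (-α) (n-1) := by
            simp only [mul_assoc]; rw [(H (n-1)).2, mul_one]
        _ = k (-α) (n+1) * h (-α) (n+1) * (k (-α) n - k (-α-1) n) * h (-α) (n-1) := by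
            rw [← e]; simp only [mul_assoc]
        _ = _ := by rw [(H (n+1)).2, one_mul]

def u (h k : ℤ → ℤ → R) (α n : ℤ) : R := h α (n+1) * (k α n - k (α-1) n)

theorem u_eq (S : HSys q h k) (α n) : u h k α (n+1) = (h α (n+1) - h (α+1) (n+1)) * k α n := by
  have := S.ev α (n+1); simpa [u] using this

theorem u_comm (S : HSys q h k) (α β n) (hab : β ≠ α) : h β n * u h k α n = u h k α n * h β n := by
  unfold u
  have e1 := S.c1 β α n hab
  have e2 := S.hk0 β α n
  have e3 := S.hk0 β (α-1) n
  calc h β n * (h α (n+1) * (k α n - k (α-1) n))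
      = (h β n * h α (n+1)) * (k α n - k (α-1) n) := by rw [mul_assoc]
    _ = h α (n+1) * (h β n * k α n - h β n * k (α-1) n) := by rw [e1]; noncomm_ring
    _ = _ := by rw [e2, e3]; noncomm_ring

theorem rc {a b c d: R} (hh : a * b = c) : a * (b * d) = c * d := by rw [← hh, mul_assoc]

/-- deformed commutation, different indices -/
theorem d1 (S : HSys q h k) (α β n) (hab : α ≠ β) :
    u h k α n * h α n * h β (n+1) + h α n * (u h k β (n+1) * h β (n+1))
     = u h k β (n+1) * h β (n+1) * h α n + h β (n+1) * (u h k α n * h α n) := by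
  rw [S.u_eq β n, u]
  by_cases hb : β = α - 1
  · have hb' : β + 1 = α := by omega
    rw [hb', ← hb]
    have e1 := S.c1 α β n hab
    have e2 := S.hk0 α β n
    have e3 := S.c0 α β (n+1)
    have e4 := S.hkq β n
    have e5 := S.cq α n
    have e6 := S.hk1' β α n hab.symm
    -- Y = h α (n+1) * k β n
    have f1 : h β (n+1) * (h α (n+1) * k β n) = q * (h α (n+1) * k β n * h β (n+1)) := by
      rw [← mul_assoc, ← e3, mul_assoc, e4, ← mul_assoc, ← S.qc]; noncomm_ring
    have f2 : h α n * (h α (n+1) * k β n) = q * (h α (n+1) * k β n * h α n) := by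
      rw [← mul_assoc, e5, mul_assoc, mul_assoc, e2]; noncomm_ring
    have f3 : h α n * (h β (n+1) * k β n) = h β (n+1) * k β n * h α n := by
      rw [← mul_assoc, e1, mul_assoc, e2, mul_assoc]
    have f4 : h β (n+1) * (h α (n+1) * k α n) = h α (n+1) * k α n * h β (n+1) := by
      rw [← mul_assoc, ← e3, mul_assoc, e6, mul_assoc]
    rw [mul_sub, sub_mul (h β (n+1))]
    generalize h α (n+1) * k β n = Y at *
    generalize h β (n+1) * k β n = Z at *
    generalize h α (n+1) * k α n = W at *
    generalize h β (n+1) = b at *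
    generalize h α n = a at *
    have g : ∀ x y : R, a * ((x - y) * b) = (a * x - a * y) * b := by intros; noncomm_ring
    have g' : ∀ x y : R, b * ((x - y) * a) = (b * x - b * y) * a := by intros; noncomm_ring
    rw [g, g', f1, f2, f3, f4]
    have t1 : q * (Y * a) * b = q * (Y * (b * a)) := by rw [← e1]; noncomm_ring
    have t2 : W * a * b = W * b * a := by rw [mul_assoc, e1, mul_assoc]
    have t3 : Z * a * b = Z * b * a := by rw [mul_assoc, e1, mul_assoc]
    have t4 : Y * a * b = Y * b * a := by rw [mul_assoc, e1, mul_assoc]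
    simp only [sub_mul, t1, t2, t3, t4]
    noncomm_ring
  · have e1 := S.c1 α β n hab
    have f1 : h β (n+1) * (h α (n+1) * (k α n - k (α-1) n)) = (h α (n+1) * (k α n - k (α-1) n)) * h β (n+1) := by
      rw [← mul_assoc, ← S.c0 α β (n+1), mul_assoc, mul_sub, S.hk1' β α n hab.symm,
        S.hk1' β (α-1) n hb]; noncomm_ring
    have f2 : h α n * ((h β (n+1) - h (β+1) (n+1)) * k β n) = ((h β (n+1) - h (β+1) (n+1)) * k β n) * h α n := by
      rw [← mul_assoc, mul_sub, e1, S.c1 α (β+1) n (by omega), ← sub_mul, mul_assoc, S.hk0, mul_assoc]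
    rw [← mul_assoc (h α n), f2, ← mul_assoc (h β (n+1)) _ (h α n), f1]
    simp only [mul_assoc, e1]
    noncomm_ring

theorem dq (S : HSys q h k) (α n) :
    u h k α n * h α n * h α (n+1) + h α n * (u h k α (n+1) * h α (n+1))
     = q * (u h k α (n+1) * h α (n+1) * h α n + h α (n+1) * (u h k α n * h α n)) := by
  rw [S.u_eq α n, u, mul_sub, sub_mul (h α (n+1))]
  have p1 : h α n * (h α (n+1) * k α n) = q * (h α (n+1) * k α n * h α n) := by
    rw [← mul_assoc, S.cq, mul_assoc, mul_assoc, S.hk0]; noncomm_ring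
  have p2 : h α (n+1) * (h α (n+1) * k α n) = q * (h α (n+1) * k α n * h α (n+1)) := by
    rw [S.hkq]
    rw [← mul_assoc, ← S.qc]; nth_rewrite 2 [S.qc]
    rw [mul_assoc q, ← mul_assoc (h α (n+1)), S.hkq, ← S.qc]
  have p3 : h α n * (h (α+1) (n+1) * k α n) = (h (α+1) (n+1) * k α n) * h α n := by
    rw [← mul_assoc, S.c1 _ _ _ (by omega), mul_assoc, S.hk0, mul_assoc]
  have p4 : h α (n+1) * (h α (n+1) * k (α-1) n) = (h α (n+1) * k (α-1) n) * h α (n+1) := by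
    rw [mul_assoc _ _ (h α (n+1)), S.hk1' _ _ _ (by omega)]
  have e := S.cq α n
  have qc := S.qc
  generalize h α (n+1) * k α n = P at *
  generalize h (α+1) (n+1) * k α n = Q' at *
  generalize h α (n+1) * k (α-1) n = Q at *
  generalize h α (n+1) = b at *
  generalize h α n = a at *
  have g : a * ((P - Q') * b) = (a * P - a * Q') * b := by noncomm_ring
  have g' : b * ((P - Q) * a) = (b * P - b * Q) * a := by noncomm_ring
  rw [g, g', p1, p2, p3, p4]
  have t : ∀ X : R, X * a * b = q * (X * b * a) := by
    intro X; rw [mul_assoc, e, ← mul_assoc, ← qc]; noncomm_ring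
  have t' : q * (P * a) * b = q * (q * (P * b) * a) := by rw [mul_assoc, t]; noncomm_ring
  simp only [sub_mul, t, t']
  noncomm_ring

theorem W (S : HSys q h k) (α n) : (h (α+1) (n+1) * k α n) * u h k α n
    = u h k (α+1) n * (h (α+1) n * k α (n-1)) := by
  have e : u h k α n = _ := S.ev α n
  rw [e, u, add_sub_cancel_right]
  calc _ = h (α+1) (n+1) * (k α n * h α n * k α (n-1)) - h (α+1) (n+1) * (k α n * h (α+1) n) * k α (n-1) := by
        noncomm_ring
    _ = h (α+1) (n+1) * (k (α+1) n * h (α+1) n) * k α (n-1) - h (α+1) (n+1) * (k α n * h (α+1) n) * k α (n-1) := by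
        rw [S.khk, S.hkh]
    _ = _ := by noncomm_ring

theorem dev (S : HSys q h k) (α n) :
    u h k α (n+1) * h α (n+1) * (k α n - k (α-1) n) + h α (n+1) * (-(k α n * u h k α n) + k (α-1) n * u h k (α-1) n)
    = (u h k α n * h α n - u h k (α+1) n * h (α+1) n) * k α (n-1)
      - (h α n - h (α+1) n) * (k α (n-1) * u h k α (n-1)) := by
  have w1 := S.W α n
  have w2 := S.W (α-1) n
  rw [sub_add_cancel] at w2
  have e : u h k α n = (h α n - h (α+1) n) * k α (n-1) := S.ev α n
  have e1 := S.u_eq α n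
  calc _ = u h k α (n+1) * u h k α n - h α (n+1) * k α n * u h k α n + h α (n+1) * k (α-1) n * u h k (α-1) n := by
        conv_rhs => enter [1,1,2]; rw [u]
        noncomm_ring
    _ = - (h (α+1) (n+1) * k α n * u h k α n) + h α (n+1) * k (α-1) n * u h k (α-1) n := by
        rw [e1]; noncomm_ring
    _ = - (u h k (α+1) n * (h (α+1) n * k α (n-1))) + u h k α n * (h α n * k (α-1) (n-1)) := by
        rw [w1, w2]
    _ = u h k α n * (h α n * k α (n-1)) - (u h k (α+1) n * (h (α+1) n * k α (n-1)))
         - u h k α n * u h k α (n-1) := by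
        conv_rhs => enter [2,2]; rw [u]
        rw [sub_add_cancel]; noncomm_ring
    _ = u h k α n * (h α n * k α (n-1)) - (u h k (α+1) n * (h (α+1) n * k α (n-1)))
         - (h α n - h (α+1) n) * k α (n-1) * u h k α (n-1) := by rw [← e]
    _ = _ := by noncomm_ring

open TrivSqZeroExt in
theorem deform (S : HSys q h k) : HSys (R := DualNumber R) (inl q)
    (fun α n => inl (h α n) + inr (u h k α n * h α n))
    (fun α n => inl (k α n) + inr (-(k α n * u h k α n))) where
  qc x := by ext <;> simp [S.qc]
  nd α := by
    refine (S.nd α).imp (fun H n => ?_) (fun H n => ?_)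
    · simp [H]
    · constructor <;> ext <;> simp [H]
      · rw [← mul_assoc, (H n).1, mul_assoc, (H n).1]; simp
      · rw [← mul_assoc, mul_assoc _ _ (h α n)]; simp
  c0 α β n := by
    ext
    · simp [S.c0]
    · by_cases hab : α = β
      · simp [hab]
      · simp
        have e1 := S.u_comm α β n (Ne.symm hab)
        have e2 := S.u_comm β α n hab
        rw [← mul_assoc, ← mul_assoc, e1, e2]
        simp only [mul_assoc, S.c0 α β n]
        abel
  c1 α β n hab := by
    ext
    · simp [S.c1 _ _ _ hab]
    · simp
      have := S.d1 α β n hab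
      rw [add_comm, this, add_comm]
  cq α n := by
    ext
    · simp [S.cq]
    · simp
      have := S.dq α n
      rw [add_comm, this, add_comm]
  ev α n := by
    ext
    · simp [S.ev]
    · simp
      have := S.dev α n
      rw [add_comm] 
      simp only [sub_eq_add_neg, neg_add, neg_neg, mul_add, add_mul, mul_neg, neg_mul, mul_assoc] at this ⊢
      rw [this]; abel

end HSys

theorem hsys_exchange (m : ℕ) : ∀ {R : Type*} [Ring R] {q : R} {h k : ℤ → ℤ → R} (_ : HSys q h k) (α : ℤ)
   (_ : ∀ n, k (α-1) n = 0) (_ : ∀ n, h α n * k α n = 1 ∧ k α n * h α n = 1) (a : ℤ),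
   h α a * h α (a+m+1) - q * (h α (a+m+1) * h α a) + h α (a+m) * h α (a+1) - q * (h α (a+1) * h α (a+m)) = 0 := by
  induction m using Nat.strong_induction_on with
  | _ m ih =>
  intro R _ q h k S α h0 hu a
  match m, ih with
  | 0, _ => simp [S.cq]
  | 1, _ =>
    have e := S.ev α (a+1)
    have c := S.c1 α (α+1) a (by omega)
    have q1 := S.cq α a
    have q2 := S.hkq α a
    have q3 : k α (a+1) * h α a = q * (h α a * k α (a+1)) := by
      have := S.dual.hkq (-α) a
      simpa using this
    simp [h0] at e
    have e' : h (α+1) (a+1) = h α (a+1) - h α (a+1+1) * k α (a+1) * h α a := by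
      rw [e, mul_assoc, (hu a).2]; simp
    rw [e'] at c
    have : ((h α a * (h α (a + 1) - h α (a + 1 + 1) * k α (a + 1) * h α a)) * k α a * h α (a+1)
      = (h α (a + 1) - h α (a + 1 + 1) * k α (a + 1) * h α a) * h α a * k α a * h α (a+1)) := by rw [c]
    have l : ((h α a * (h α (a + 1) - h α (a + 1 + 1) * k α (a + 1) * h α a)) * k α a * h α (a+1))
       = q * (h α (a+1) * h α (a+1)) - h α a * h α (a+1+1) := by
      calc _ = h α a * h α (a+1) * k α a * h α (a+1) - h α a * (h α (a + 1 + 1) * (k α (a + 1) * (h α a * k α a) * h α (a+1))) := by noncomm_ring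
        _ = _ := by
          rw [(hu a).1, mul_one, (hu _).2, q1, mul_one]
          congr 1
          calc _ = q * (h α (a+1) * (h α a * k α a) * h α (a+1)) := by noncomm_ring
            _ = _ := by rw [(hu a).1, mul_one]
    have l' : (h α (a + 1) - h α (a + 1 + 1) * k α (a + 1) * h α a) * h α a * k α a * h α (a+1)
       = h α (a+1) * h α (a+1) - q * (h α (a+1+1) * h α a) := by
      calc _ = (h α (a + 1) - h α (a + 1 + 1) * (k α (a + 1) * h α a)) * (h α a * k α a) * h α (a+1) := by noncomm_ring
        _ = h α (a+1) * h α (a+1) - (h α (a + 1 + 1) * q) * (h α a * (k α (a + 1) * h α (a+1))) := by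
          rw [(hu a).1, mul_one, q3]; noncomm_ring
        _ = _ := by
          rw [(hu _).2, mul_one, ← S.qc, mul_assoc]
    rw [l, l'] at this
    simp only [Nat.cast_one]
    have t := sub_eq_zero.2 this
    rw [← neg_eq_zero, ← t]; abel
  | m+2, ih =>
    have i0 := ih m (by omega) S α h0 hu (a+1)
    have hu' := S.deform.nd α
    have i1 := ih (m+1) (by omega) S.deform α (by simp [h0]) (by
      rcases hu' with H | H
      · intro n
        have := congrArg TrivSqZeroExt.fst (H n).1
        simp at this
        have e := hu n
        rw [this] at e
        have e : (1:R) = 0 := by simpa using e.1.symm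
        have z : ∀ x : R, x = 0 := fun x => by rw [← mul_one x, e, mul_zero]
        constructor <;> ext <;> exact (z _).trans (z _).symm
      · exact H) a
    have i2 := congrArg TrivSqZeroExt.snd i1
    have ud : ∀ n, HSys.u h k α n * h α n = h α (n+1) := by
      intro n; simp [HSys.u, h0, mul_assoc, hu]
    simp [ud] at i2
    push_cast at i0 i2 ⊢
    rw [show a + 1 + (m:ℤ) + 1 = a + m + 1 + 1 by ring, show a + 1 + (m:ℤ) = a + m + 1 by ring] at i0
    rw [show a + ((m:ℤ) + 1) = a + m + 1 by ring] at i2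
    rw [show a + ((m:ℤ) + 2) = a + m + 1 + 1 by ring]
    have i3 := congrArg₂ (· - ·) i2 i0
    simp only [sub_zero] at i3
    rw [← i3]
    noncomm_ring

def QC {R : Type*} [Ring R] (q : Rˣ) (x y : R) (j : ℤ) : Prop := x * y = ((q ^ j : Rˣ) : R) * (y * x)

namespace QC
variable {R : Type*} [Ring R] {q : Rˣ} 

theorem qz (hq : ∀ x : R, (q : R) * x = x * (q : R)) (j : ℤ) (x : R) :
    ((q ^ j : Rˣ) : R) * x = x * ((q ^ j : Rˣ) : R) := by
  have h1 : Commute x (q : R) := (hq x).symm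
  exact (h1.units_zpow_right j).symm

theorem mul_left (hq : ∀ x : R, (q : R) * x = x * (q : R)) {x x' y : R} {i j : ℤ}
    (h1 : QC q x y i) (h2 : QC q x' y j) : QC q (x * x') y (i + j) := by
  unfold QC at *
  rw [mul_assoc, h2, ← mul_assoc, ← qz hq, mul_assoc, ← mul_assoc x, h1, add_comm, zpow_add, Units.val_mul]
  noncomm_ring

theorem symm {x y : R} {j : ℤ} (h1 : QC q x y j) : QC q y x (-j) := by
  unfold QC at *
  rw [h1, ← mul_assoc, ← Units.val_mul, ← zpow_add]; simp

theorem cast {x y : R} {i j : ℤ} (h1 : QC q x y i) (e : i = j) : QC q x y j := e ▸ h1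

theorem mul_right (hq : ∀ x : R, (q : R) * x = x * (q : R)) {x x' y : R} {i j : ℤ}
    (h1 : QC q y x i) (h2 : QC q y x' j) : QC q y (x * x') (i + j) :=
  (mul_left hq h1.symm h2.symm).symm.cast (by ring)

theorem inv_right (hq : ∀ x : R, (q : R) * x = x * (q : R)) {x y z : R} {j : ℤ}
    (h1 : QC q x y j) (h2 : y * z = 1) (h3 : z * y = 1) : QC q x z (-j) := by
  have h1 := h1.symm
  unfold QC at *
  calc x * z = z * (y * x) * z := by rw [← mul_assoc, h3, one_mul]
    _ = z * ((q ^ (-j) : Rˣ) : R) * x * (y * z) := by rw [h1]; noncomm_ring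
    _ = _ := by rw [h2, mul_one, ← qz hq, mul_assoc]

theorem inv_left (hq : ∀ x : R, (q : R) * x = x * (q : R)) {x y z : R} {j : ℤ}
    (h1 : QC q y x j) (h2 : y * z = 1) (h3 : z * y = 1) : QC q z x (-j) :=
  (inv_right hq h1.symm h2 h3).symm.cast (by ring)

theorem zpow_left (hq : ∀ x : R, (q : R) * x = x * (q : R)) {x : Rˣ} {y : R} {j : ℤ}
    (h1 : QC q (x : R) y j) (n : ℤ) : QC q ((x ^ n : Rˣ) : R) y (n * j) := by
  induction n using Int.induction_on with
  | zero => simp [QC]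
  | succ n ih => 
    rw [zpow_add, Units.val_mul, zpow_one]
    exact (mul_left hq ih h1).cast (by ring)
  | pred n ih =>
    rw [zpow_sub, Units.val_mul, zpow_one]
    exact (mul_left hq ih (inv_left hq h1 x.mul_inv x.inv_mul)).cast (by ring)

theorem comm {x y : R} (h1 : QC q x y 0) : x * y = y * x := by simpa [QC] using h1
end QC

section
variable {R : Type*} [Ring R] (q : Rˣ)
    (hq : ∀ x : R, (q : R) * x = x * (q : R))
    (r : ℕ)
    (M Mi : ℕ → ℤ → R)
    (hMiL : ∀ (α : ℕ) (n : ℤ), α ≤ r + 1 → M α n * Mi α n = 1)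
    (hMiR : ∀ (α : ℕ) (n : ℤ), α ≤ r + 1 → Mi α n * M α n = 1)
    (hMsys : ∀ (α : ℕ) (n : ℤ), 1 ≤ α → α ≤ r + 1 →
      (q : R) ^ α * M α (n + 1) * M α (n - 1) = M α n ^ 2 - M (α + 1) n * M (α - 1) n)
    (c0 : ∀ (α β : ℕ) (n : ℤ), α ≤ r + 1 → β ≤ r + 1 → QC q (M α n) (M β n) 0)
    (c1 : ∀ (α β : ℕ) (n : ℤ), α ≤ r + 1 → β ≤ r + 1 →
      QC q (M α n) (M β (n+1)) ((min α β : ℕ) : ℤ))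

include hq hMiL hMiR hMsys c0 in
theorem S_form (a : ℕ) (n : ℤ) (ha : a ≤ r) :
    M (a+1) n * Mi a n - M (a+2) n * Mi (a+1) n
      = ((q ^ ((a:ℤ)+1) : Rˣ) : R) * (M (a+1) (n+1) * M (a+1) (n-1) * (Mi (a+1) n * Mi a n)) := by
  have e := hMsys (a+1) n (by omega) (by omega)
  have e2 : Mi (a+1) n * Mi a n = Mi a n * Mi (a+1) n := 
    (((c0 (a+1) a n (by omega) (by omega)).inv_right hq (hMiL _ _ (by omega)) (hMiR _ _ (by omega))).inv_left hq
      (hMiL _ _ (by omega)) (hMiR _ _ (by omega))).cast (by simp) |>.comm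
  have qq : ((q ^ ((a:ℤ)+1) : Rˣ) : R) = (q:R)^(a+1) := by
    have : ((a:ℤ)+1) = ((a+1 : ℕ) : ℤ) := by push_cast; rfl
    rw [this, zpow_natCast]; simp
  rw [qq]
  calc _ = M (a+1) n * (M (a+1) n * Mi (a+1) n) * Mi a n - M (a+2) n * (M a n * Mi a n) * Mi (a+1) n := by
        rw [hMiL _ _ (by omega), hMiL _ _ (by omega)]; simp
    _ = (M (a+1) n ^ 2 - M (a+1+1) n * M (a+1-1) n) * (Mi (a+1) n * Mi a n) := by
        rw [sub_mul]; nth_rewrite 2 [e2]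
        simp only [Nat.add_sub_cancel]; noncomm_ring
    _ = _ := by rw [← e]; simp only [mul_assoc]

include hq hMiL hMiR hMsys c0 c1 in
theorem R_form (a : ℕ) (n : ℤ) (ha : a ≤ r) :
    (M (a+1) n * Mi a n - M (a+2) n * Mi (a+1) n) * (M a (n-1) * Mi (a+1) (n-1))
      = ((q ^ (-(a:ℤ)) : Rˣ) : R) * (M (a+1) (n+1) * (Mi (a+1) n * Mi a n) * M a (n-1)) := by
  rw [S_form q hq r M Mi hMiL hMiR hMsys c0 a n ha]
  have c1' := fun α β hα hβ => c1 α β (n-1) hα hβ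
  simp only [sub_add_cancel] at c1'
  have e1 : QC q (M (a+1) (n-1)) (Mi (a+1) n * Mi a n) (-(2*a+1)) :=
    (QC.mul_right hq ((c1' (a+1) (a+1) (by omega) (by omega)).inv_right hq (hMiL _ _ (by omega)) (hMiR _ _ (by omega)))
      ((c1' (a+1) a (by omega) (by omega)).inv_right hq (hMiL _ _ (by omega)) (hMiR _ _ (by omega)))).cast (by
        simp; ring)
  have e2 := (c0 (a+1) a (n-1) (by omega) (by omega)).comm
  unfold QC at e1
  calc _ = ((q ^ ((a:ℤ)+1) : Rˣ) : R) * (M (a+1) (n+1) * (M (a+1) (n-1) * (Mi (a+1) n * Mi a n)) * (M a (n-1) * Mi (a+1) (n-1))) := by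
        simp only [mul_assoc]
    _ = ((q ^ ((a:ℤ)+1) : Rˣ) : R) * ((M (a+1) (n+1) * ((q ^ (-(2*(a:ℤ)+1)) : Rˣ) : R)) * (Mi (a+1) n * Mi a n) * (M (a+1) (n-1) * M a (n-1)) * Mi (a+1) (n-1)) := by
        rw [e1]; simp only [mul_assoc]
    _ = (((q ^ ((a:ℤ)+1) : Rˣ) : R) * ((q ^ (-(2*(a:ℤ)+1)) : Rˣ) : R)) * (M (a+1) (n+1) * (Mi (a+1) n * Mi a n) * M a (n-1) * (M (a+1) (n-1) * Mi (a+1) (n-1))) := by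
        rw [e2, ← QC.qz hq]; simp only [mul_assoc]
    _ = _ := by
        rw [hMiL _ _ (by omega), ← Units.val_mul, ← zpow_add, mul_one]
        congr 4; ring

include hq hMiL hMiR hMsys c0 c1 in
theorem L_form (b : ℕ) (n : ℤ) (hb : b + 1 ≤ r) :
    (M (b+2) (n+1) * Mi (b+1) (n+1)) * (M (b+1) n * Mi (b+2) n - M b n * Mi (b+1) n)
      = ((q ^ (-((b:ℤ)+1)) : Rˣ) : R) * (M (b+2) (n+1) * (Mi (b+2) n * Mi (b+1) n) * M (b+1) (n-1)) := by
  have s := S_form q hq r M Mi hMiL hMiR hMsys c0 b n (by omega)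
  have k1 : ∀ α β, α ≤ r+1 → β ≤ r+1 → M α n * Mi β n = Mi β n * M α n := fun α β hα hβ =>
    (((c0 α β n hα hβ).inv_right hq (hMiL _ _ hβ) (hMiR _ _ hβ)).cast (by simp)).comm
  have f : M (b+1) n * Mi (b+2) n - M b n * Mi (b+1) n =
      (Mi (b+2) n * M b n) * (M (b+1) n * Mi b n - M (b+2) n * Mi (b+1) n) := by
    have t1 : Mi (b+2) n * M b n * (M (b+1) n * Mi b n) = M (b+1) n * Mi (b+2) n := by
      rw [k1 (b+1) b (by omega) (by omega), ← mul_assoc, mul_assoc _ (M b n), hMiL _ _ (by omega), mul_one,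
        k1 _ _ (by omega) (by omega)]
    have t2 : Mi (b+2) n * M b n * (M (b+2) n * Mi (b+1) n) = M b n * Mi (b+1) n := by
      rw [← k1 b (b+2) (by omega) (by omega), mul_assoc, ← mul_assoc (Mi (b+2) n), hMiR _ _ (by omega), one_mul]
    rw [mul_sub, t1, t2]
  rw [f, s]
  have c1' := fun α β hα hβ => c1 α β (n-1) hα hβ
  simp only [sub_add_cancel] at c1'
  have e1 : QC q (M (b+1) (n-1)) (Mi (b+1) n * Mi b n) (-(2*b+1)) :=
    (QC.mul_right hq ((c1' (b+1) (b+1) (by omega) (by omega)).inv_right hq (hMiL _ _ (by omega)) (hMiR _ _ (by omega)))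
      ((c1' (b+1) b (by omega) (by omega)).inv_right hq (hMiL _ _ (by omega)) (hMiR _ _ (by omega)))).cast (by
        simp; ring)
  have e2 : QC q (Mi (b+2) n * M b n) (M (b+1) (n+1)) (-1) :=
    (QC.mul_left hq ((c1 (b+2) (b+1) n (by omega) (by omega)).inv_left hq (hMiL _ _ (by omega)) (hMiR _ _ (by omega)))
      (c1 b (b+1) n (by omega) (by omega))).cast (by simp)
  have e3 : M b n * (Mi (b+1) n * Mi b n) = Mi (b+1) n := by
    rw [← mul_assoc, k1 _ _ (by omega) (by omega), mul_assoc, hMiL _ _ (by omega), mul_one]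
  unfold QC at e1 e2
  set X := ((q ^ ((b:ℤ)+1) : Rˣ) : R) with hX
  set Y := ((q ^ (-(2*(b:ℤ)+1)) : Rˣ) : R) with hY
  set Z := ((q ^ (-1 : ℤ) : Rˣ) : R) with hZ
  have cX : ∀ x, X * x = x * X := QC.qz hq _
  have cY : ∀ x, Y * x = x * Y := QC.qz hq _
  have cZ : ∀ x, Z * x = x * Z := QC.qz hq _
  have xyz : X * Z * Y = ((q ^ (-((b:ℤ)+1)) : Rˣ) : R) := by
    rw [hX, hY, hZ, ← Units.val_mul, ← zpow_add, ← Units.val_mul, ← zpow_add]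
    congr 2; ring
  rw [← xyz]
  calc _ = M (b+2) (n+1) * Mi (b+1) (n+1) * ((Mi (b+2) n * M b n) * X) * (M (b+1) (n+1) * (M (b+1) (n-1) * (Mi (b+1) n * Mi b n))) := by
        simp only [mul_assoc]
    _ = (M (b+2) (n+1) * Mi (b+1) (n+1) * X) * ((Mi (b+2) n * M b n) * M (b+1) (n+1)) * Y * ((Mi (b+1) n * Mi b n) * M (b+1) (n-1)) := by
        rw [e1, ← cX]; simp only [mul_assoc]
    _ = X * (M (b+2) (n+1) * Mi (b+1) (n+1) * Z) * (M (b+1) (n+1) * (Mi (b+2) n * M b n) * Y) * ((Mi (b+1) n * Mi b n) * M (b+1) (n-1)) := by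
        rw [e2, ← cX]; simp only [mul_assoc]
    _ = X * Z * (M (b+2) (n+1) * Mi (b+1) (n+1) * Y) * (M (b+1) (n+1) * (Mi (b+2) n * M b n)) * ((Mi (b+1) n * Mi b n) * M (b+1) (n-1)) := by
        rw [← cZ, ← cY]; simp only [mul_assoc]
    _ = X * Z * Y * (M (b+2) (n+1) * (Mi (b+1) (n+1) * M (b+1) (n+1)) * Mi (b+2) n * (M b n * (Mi (b+1) n * Mi b n)) * M (b+1) (n-1)) := by
        rw [← cY]; simp only [mul_assoc]
    _ = _ := by
        rw [e3, hMiR _ _ (by omega)]; simp only [mul_assoc, one_mul]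

def Hf (r : ℕ) (M Mi : ℕ → ℤ → R) (α n : ℤ) : R :=
  if 0 ≤ α ∧ α ≤ r then M (α.toNat + 1) n * Mi α.toNat n else 0
def Kf (r : ℕ) (M Mi : ℕ → ℤ → R) (α n : ℤ) : R :=
  if 0 ≤ α ∧ α ≤ r then M α.toNat n * Mi (α.toNat + 1) n else 0

include hq hMiL hMiR hMsys c0 c1 in
theorem hsys_of_M (hM0 : ∀ n : ℤ, M 0 n = 1) (hMtop : ∀ n : ℤ, M (r + 2) n = 0) :
    HSys (q : R) (Hf r M Mi) (Kf r M Mi) := by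
  have gc0 : ∀ (a b : ℕ) n, a ≤ r → b ≤ r →
      QC q (M (a+1) n * Mi a n) (M (b+1) n * Mi b n) 0 := by
    intro a b n ha hb
    have t : ∀ c ≤ r+1, QC q (M c n) (M (b+1) n * Mi b n) 0 := fun c hc =>
      ((c0 c (b+1) n hc (by omega)).mul_right hq ((c0 c b n hc (by omega)).inv_right hq
        (hMiL _ _ (by omega)) (hMiR _ _ (by omega)))).cast (by simp)
    exact (QC.mul_left hq (t (a+1) (by omega)) ((t a (by omega)).inv_left hq
      (hMiL _ _ (by omega)) (hMiR _ _ (by omega)))).cast (by simp)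
  have gc1 : ∀ (a b : ℕ) n, a ≤ r → b ≤ r →
      QC q (M (a+1) n * Mi a n) (M (b+1) (n+1) * Mi b (n+1)) (if a = b then 1 else 0) := by
    intro a b n ha hb
    have t : ∀ c ≤ r+1, QC q (M c n) (M (b+1) (n+1) * Mi b (n+1)) (((min c (b+1) : ℕ) : ℤ) - (min c b : ℕ)) := fun c hc =>
      ((c1 c (b+1) n hc (by omega)).mul_right hq ((c1 c b n hc (by omega)).inv_right hq
        (hMiL _ _ (by omega)) (hMiR _ _ (by omega)))).cast (by ring)
    exact (QC.mul_left hq (t (a+1) (by omega)) ((t a (by omega)).inv_left hq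
      (hMiL _ _ (by omega)) (hMiR _ _ (by omega)))).cast (by split_ifs <;> omega)
  have gk : ∀ (a : ℕ) n, a ≤ r → (M (a+1) n * Mi a n) * (M a n * Mi (a+1) n) = 1 := by
    intro a n ha
    rw [mul_assoc, ← mul_assoc (Mi a n), hMiR _ _ (by omega), one_mul, hMiL _ _ (by omega)]
  have kg : ∀ (a : ℕ) n, a ≤ r → (M a n * Mi (a+1) n) * (M (a+1) n * Mi a n) = 1 := by
    intro a n ha
    rw [mul_assoc, ← mul_assoc (Mi (a+1) n), hMiR _ _ (by omega), one_mul, hMiL _ _ (by omega)]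
  have vH : ∀ (a : ℕ) n, a ≤ r → Hf r M Mi a n = M (a+1) n * Mi a n := by
    intro a n ha; rw [Hf, if_pos (by omega)]; simp
  have vK : ∀ (a : ℕ) n, a ≤ r → Kf r M Mi a n = M a n * Mi (a+1) n := by
    intro a n ha; rw [Kf, if_pos (by omega)]; simp
  have zH : ∀ (α : ℤ) n, ¬ (0 ≤ α ∧ α ≤ r) → Hf r M Mi α n = 0 := fun α n h => if_neg h
  have zK : ∀ (α : ℤ) n, ¬ (0 ≤ α ∧ α ≤ r) → Kf r M Mi α n = 0 := fun α n h => if_neg h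
  refine ⟨hq, ?_, ?_, ?_, ?_, ?_⟩
  · intro α
    by_cases h : 0 ≤ α ∧ α ≤ r
    · obtain ⟨a, rfl⟩ := Int.eq_ofNat_of_zero_le h.1
      right; intro n
      rw [vH a n (by omega), vK a n (by omega)]
      exact ⟨gk a n (by omega), kg a n (by omega)⟩
    · left; intro n; exact ⟨zH _ _ h, zK _ _ h⟩
  · intro α β n
    by_cases h : 0 ≤ α ∧ α ≤ r
    swap
    · simp [zH _ _ h]
    by_cases h' : 0 ≤ β ∧ β ≤ r
    swap
    · simp [zH _ _ h']
    obtain ⟨a, rfl⟩ := Int.eq_ofNat_of_zero_le h.1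
    obtain ⟨b, rfl⟩ := Int.eq_ofNat_of_zero_le h'.1
    rw [vH a n (by omega), vH b n (by omega)]
    exact (gc0 a b n (by omega) (by omega)).comm
  · intro α β n hab
    by_cases h : 0 ≤ α ∧ α ≤ r
    swap
    · simp [zH _ _ h]
    by_cases h' : 0 ≤ β ∧ β ≤ r
    swap
    · simp [zH _ _ h']
    obtain ⟨a, rfl⟩ := Int.eq_ofNat_of_zero_le h.1
    obtain ⟨b, rfl⟩ := Int.eq_ofNat_of_zero_le h'.1
    rw [vH a n (by omega), vH b (n+1) (by omega)]
    exact ((gc1 a b n (by omega) (by omega)).cast (if_neg (by omega))).comm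
  · intro α n
    by_cases h : 0 ≤ α ∧ α ≤ r
    swap
    · simp [zH _ _ h]
    obtain ⟨a, rfl⟩ := Int.eq_ofNat_of_zero_le h.1
    rw [vH a n (by omega), vH a (n+1) (by omega)]
    have := ((gc1 a a n (by omega) (by omega)).cast (if_pos rfl))
    simpa [QC] using this
  · intro α n
    by_cases h : 0 ≤ α ∧ α ≤ r
    swap
    · simp [zH _ _ h, zK _ _ h]
    obtain ⟨a, rfl⟩ := Int.eq_ofNat_of_zero_le h.1
    have ha : a ≤ r := by omega
    have top : Hf r M Mi ((a:ℤ)+1) n = M (a+2) n * Mi (a+1) n := by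
      by_cases h2 : a + 1 ≤ r
      · exact_mod_cast vH (a+1) n h2
      · rw [zH _ _ (by omega), show a = r by omega, hMtop, zero_mul]
    rw [top, vH a n ha, vH a _ ha, vK a _ ha, vK a _ ha,
      R_form q hq r M Mi hMiL hMiR hMsys c0 c1 a n ha]
    rcases a with _ | b
    · rw [zK _ _ (by omega)]
      have m0 : ∀ n, Mi 0 n = 1 := fun n => by
        have := hMiL 0 n (by omega); rwa [hM0, one_mul] at this
      simp [hM0, m0]
    · rw [show ((b+1 : ℕ) : ℤ) - 1 = b by push_cast; ring, vK b _ (by omega),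
        L_form q hq r M Mi hMiL hMiR hMsys c0 c1 b n ha]
      push_cast; rfl
end


theorem quantum_Q_opposite_current_exchange
    {R : Type*} [Ring R] (q A Δ : Rˣ)
    (hq : ∀ x : R, (q : R) * x = x * (q : R))
    (r : ℕ) (hr : 1 ≤ r)
    (M Mi : ℕ → ℤ → R)
    (hM0 : ∀ n : ℤ, M 0 n = 1)
    (hMtop : ∀ n : ℤ, M (r + 2) n = 0)
    (hMiL : ∀ (α : ℕ) (n : ℤ), α ≤ r + 1 → M α n * Mi α n = 1)
    (hMiR : ∀ (α : ℕ) (n : ℤ), α ≤ r + 1 → Mi α n * M α n = 1)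
    (hMsys : ∀ (α : ℕ) (n : ℤ), 1 ≤ α → α ≤ r + 1 →
      (q : R) ^ α * M α (n + 1) * M α (n - 1) = M α n ^ 2 - M (α + 1) n * M (α - 1) n)
    (hcom : ∀ (α β ε : ℕ) (n : ℤ), ε ≤ 1 → α ≤ r + 1 → β ≤ r + 1 →
      M α n * M β (n + (ε : ℤ)) = (q : R) ^ (ε * min α β) * M β (n + (ε : ℤ)) * M α n)
    (hAΔ : ∀ n : ℤ, M (r + 1) n = ((A ^ n : Rˣ) : R) * (Δ : R))
    (hΔM : ∀ (α : ℕ) (n : ℤ), 1 ≤ α → α ≤ r + 1 →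
      (Δ : R) * M α n = ((q ^ ((α : ℤ) * n) : Rˣ) : R) * M α n * (Δ : R))
    (hAM : ∀ (α : ℕ) (n : ℤ), 1 ≤ α → α ≤ r + 1 →
      (A : R) * M α n = ((q ^ (-(α : ℤ)) : Rˣ) : R) * M α n * (A : R))
    (hΔA : (Δ : R) * (A : R) = (q : R) ^ (r + 1) * (A : R) * (Δ : R))
    (hext : ∀ (α β : ℕ) (n p : ℤ), α ≤ r + 1 → β ≤ r + 1 →
      |p| ≤ |(β : ℤ) - (α : ℤ)| + 1 →
      M α n * M β (n + p) = ((q ^ (p * ((min α β : ℕ) : ℤ)) : Rˣ) : R) * M β (n + p) * M α n) :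
    ∀ F : ℤ → R, (∀ n : ℤ, F n = ((A ^ (-n) : Rˣ) : R) * M r n * ((Δ⁻¹ : Rˣ) : R)) →
      ∀ a b : ℤ,
        F (a + 1) * F b - ((q⁻¹ : Rˣ) : R) * F b * F (a + 1)
          + F (b + 1) * F a - ((q⁻¹ : Rˣ) : R) * F a * F (b + 1) = 0 := by
  intro F hF a b
  have c0 : ∀ (α β : ℕ) (n : ℤ), α ≤ r + 1 → β ≤ r + 1 → QC q (M α n) (M β n) 0 := by
    intro α β n hα hβ
    have := hcom α β 0 n (by omega) hα hβ
    simpa [QC] using this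
  have c1 : ∀ (α β : ℕ) (n : ℤ), α ≤ r + 1 → β ≤ r + 1 →
      QC q (M α n) (M β (n+1)) ((min α β : ℕ) : ℤ) := by
    intro α β n hα hβ
    have := hcom α β 1 n (by omega) hα hβ
    unfold QC
    rw [zpow_natCast, Units.val_pow_eq_pow_val, ← mul_assoc]
    simpa using this
  have S := (hsys_of_M q hq r M Mi hMiL hMiR hMsys c0 c1 hM0 hMtop).dual
  have nz : (0:ℤ) ≤ r ∧ (r:ℤ) ≤ r := by omega
  have E := fun m a => hsys_exchange m S (-(r:ℤ))
    (by intro n; show Hf r M Mi _ n = 0; exact if_neg (by omega))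
    (by
      intro n
      show Kf r M Mi _ n * Hf r M Mi _ n = 1 ∧ Hf r M Mi _ n * Kf r M Mi _ n = 1
      rw [neg_neg, Hf, Kf, if_pos nz, if_pos nz, Int.toNat_natCast]
      constructor
      · rw [mul_assoc, ← mul_assoc (Mi (r+1) n), hMiR _ _ (by omega), one_mul, hMiL _ _ (by omega)]
      · rw [mul_assoc, ← mul_assoc (Mi r n), hMiR _ _ (by omega), one_mul, hMiL _ _ (by omega)]) a
  have G : ∀ n, F n = ((q ^ (-n) : Rˣ) : R) * Kf r M Mi (- -(r:ℤ)) n := by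
    intro n
    rw [neg_neg, Kf, if_pos nz, Int.toNat_natCast]
    have k1 : QC q (A : R) (M r n) (-(r:ℤ)) := by
      have := hAM r n hr (by omega)
      rwa [mul_assoc] at this
    have k2 := k1.zpow_left hq (-n)
    have k3 : QC q (Δ : R) (A : R) ((r:ℤ)+1) := by
      unfold QC
      rw [hΔA, mul_assoc]
      congr 1
    have k4 := (k3.symm.zpow_left hq n).symm.inv_left hq Δ.mul_inv Δ.inv_mul
    have key : F n * M (r+1) n = ((q ^ (-n) : Rˣ) : R) * M r n := by
      rw [hF, hAΔ]
      unfold QC at k2 k4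
      calc _ = ((A ^ (-n) : Rˣ) : R) * M r n * (((Δ⁻¹ : Rˣ) : R) * ((A ^ n : Rˣ) : R)) * (Δ : R) := by
            simp only [mul_assoc]
        _ = (((q ^ (-n * -(r:ℤ)) : Rˣ) : R) * (M r n * ((A ^ (-n) : Rˣ) : R) * ((q ^ (-(-(n * -((r:ℤ)+1)))) : Rˣ) : R)))
              * ((A ^ n : Rˣ) : R) * (((Δ⁻¹ : Rˣ) : R) * (Δ : R)) := by
            rw [k4, k2]; simp only [mul_assoc]
        _ = (((q ^ (-n * -(r:ℤ)) : Rˣ) : R) * ((q ^ (-(-(n * -((r:ℤ)+1)))) : Rˣ) : R)) * M r n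
              * (((A ^ (-n) : Rˣ) : R) * ((A ^ n : Rˣ) : R)) := by
            rw [Units.inv_mul, mul_one, ← QC.qz hq]; simp only [mul_assoc]
        _ = _ := by
            rw [← Units.val_mul, ← Units.val_mul, ← zpow_add, ← zpow_add, neg_add_cancel]
            simp only [zpow_zero, Units.val_one, mul_one]
            congr 3; ring
    rw [← mul_assoc, ← key, mul_assoc, hMiL _ _ (by omega), mul_one]
  set K := fun n => Kf r M Mi (- -(r:ℤ)) n with hK
  have E' : ∀ (m : ℕ) (a : ℤ), K a * K (a+m+1) - (q:R) * (K (a+m+1) * K a)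
      + K (a+m) * K (a+1) - (q:R) * (K (a+1) * K (a+m)) = 0 := E
  have GG : ∀ x y, F x * F y = ((q ^ (-(x+y)) : Rˣ) : R) * (K x * K y) := by
    intro x y
    rw [G, G, neg_add, zpow_add, Units.val_mul]
    calc _ = ((q ^ (-x) : Rˣ) : R) * (K x * ((q ^ (-y) : Rˣ) : R)) * K y := by simp only [hK, mul_assoc]
      _ = _ := by rw [← QC.qz hq]; simp only [mul_assoc]
  have E2 : ∀ a b : ℤ, a ≤ b → K (a + 1) * K b - ((q⁻¹ : Rˣ) : R) * (K b * K (a + 1))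
          + K (b + 1) * K a - ((q⁻¹ : Rˣ) : R) * (K a * K (b + 1)) = 0 := by
    intro a b hab
    obtain ⟨m, rfl⟩ := Int.le.dest hab
    have e := E' m a
    have e2 := congrArg (fun x => -(((q⁻¹ : Rˣ) : R) * x)) e
    simp only [mul_zero, neg_zero, mul_add, mul_sub, ← mul_assoc, Units.inv_mul, one_mul] at e2
    simp only [← mul_assoc]
    rw [← e2]; abel
  have E3 : K (a + 1) * K b - ((q⁻¹ : Rˣ) : R) * (K b * K (a + 1))
          + K (b + 1) * K a - ((q⁻¹ : Rˣ) : R) * (K a * K (b + 1)) = 0 := by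
    rcases le_total a b with h | h
    · exact E2 a b h
    · rw [← E2 b a h]; abel
  have E4 := congrArg (fun x => ((q ^ (-(a+b+1)) : Rˣ) : R) * x) E3
  simp only [mul_zero] at E4
  rw [mul_assoc, mul_assoc, GG, GG, GG, GG, show a + 1 + b = a + b + 1 by ring,
    show b + (a + 1) = a + b + 1 by ring, show b + 1 + a = a + b + 1 by ring,
    show a + (b + 1) = a + b + 1 by ring, ← E4]
  have cc := QC.qz hq (-(a+b+1))
  simp only [mul_add, mul_sub, ← mul_assoc]
  rw [cc ((q⁻¹ : Rˣ) : R)]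
end
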